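/- arXiv:2502.02781 — 4 statements merged into one kernel-verified Lean document; each statement's English description precedes it below -/
import Mathlib

section
/- Let n, p, d be positive integers, let Δ be a symmetric invertible real p×p matrix, S a symmetric invertible real n×n matrix, A a real p×d matrix, μ ∈ ℝ^p, and X, Z real n×p matrices. For V ∈ ℝ^{n×d} define ℓ(M; V) = tr((M − 1_n μᵀ − V Aᵀ) Δ⁻¹ (M − 1_n μᵀ − V Aᵀ)ᵀ S⁻¹). Then the function V ↦ ℓ(X; V) − ℓ(Z; V) is constant on ℝ^{n×d} if and only if X Δ⁻¹ A = Z Δ⁻¹ A. -/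
open Matrix

/-!
The discrepancy `tr(M D Mᵀ W)` is the quadratic form of a symmetric bilinear form `B`. In the
difference `B(x - u, x - u) - B(z - u, z - u)` the terms quadratic in `u` cancel, leaving a constant
minus `2 B(x - z, u)`. It is therefore constant for `u` in a subspace exactly when `x - z` is
orthogonal to that subspace. For the subspace of all `V Aᵀ`, orthogonality reads
`tr(Vᵀ W (X - Z) D A) = 0` for all `V`, that is, `W (X - Z) D A = 0`.
-/

section BilinForm

variable {R M N : Type*} [CommRing R] [AddCommGroup M] [Module R M] [AddCommGroup N] [Module R N]
  {B : LinearMap.BilinForm R M}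

lemma bilinForm_sub_self_sub_bilinForm_sub_self (hB : B.IsSymm) (x z u : M) :
    B (x - u) (x - u) - B (z - u) (z - u) = B x x - B z z - 2 * B (x - z) u := by
  simp only [map_sub, LinearMap.sub_apply, hB.eq u x, hB.eq u z]
  ring

lemma exists_forall_bilinForm_sub_self_sub_eq_iff (hB : B.IsSymm) (h2 : IsLeftRegular (2 : R))
    (f : N →ₗ[R] M) (x z : M) :
    (∃ c, ∀ v, B (x - f v) (x - f v) - B (z - f v) (z - f v) = c) ↔
      ∀ v, B (x - z) (f v) = 0 := by
  simp only [bilinForm_sub_self_sub_bilinForm_sub_self hB]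
  constructor
  · rintro ⟨c, hc⟩ v
    have c_eq : B x x - B z z = c := by simpa using hc 0
    have two_mul_eq_zero : 2 * B (x - z) (f v) = 0 := by simpa [c_eq] using hc v
    exact h2.mul_left_eq_zero_iff.mp two_mul_eq_zero
  · intro h
    exact ⟨B x x - B z z, fun v => by rw [h v, mul_zero, sub_zero]⟩

end BilinForm

section WeightedTraceForm

variable {R m n k : Type*} [CommRing R] [Fintype m] [Fintype n] [Fintype k]

/-- The bilinear form `(M, N) ↦ tr(M D Nᵀ W)` on `m × n` matrices. With `D` and `W` the inverse
column and row covariances, it is the form in the exponent of the matrix normal density. -/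
def weightedTraceForm (D : Matrix n n R) (W : Matrix m m R) :
    LinearMap.BilinForm R (Matrix m n R) :=
  LinearMap.mk₂ R (fun M N => trace (M * D * Nᵀ * W))
    (fun _ _ _ => by simp only [Matrix.add_mul, trace_add])
    (fun _ _ _ => by simp only [Matrix.smul_mul, trace_smul])
    (fun _ _ _ => by simp only [transpose_add, Matrix.add_mul, Matrix.mul_add, trace_add])
    (fun _ _ _ => by simp only [transpose_smul, Matrix.smul_mul, Matrix.mul_smul, trace_smul])

lemma weightedTraceForm_apply (D : Matrix n n R) (W : Matrix m m R) (M N : Matrix m n R) :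
    weightedTraceForm D W M N = trace (M * D * Nᵀ * W) := rfl

lemma weightedTraceForm_isSymm {D : Matrix n n R} {W : Matrix m m R} (hD : D.IsSymm)
    (hW : W.IsSymm) : (weightedTraceForm D W).IsSymm where
  eq M N := calc
    trace (M * D * Nᵀ * W) = trace (M * D * Nᵀ * W)ᵀ := (trace_transpose _).symm
    _ = trace (W * (N * D * Mᵀ)) := by
      simp only [transpose_mul, transpose_transpose, hD.eq, hW.eq, Matrix.mul_assoc]
    _ = trace (N * D * Mᵀ * W) := trace_mul_comm _ _

lemma forall_weightedTraceForm_mul_transpose_eq_zero_iff (D : Matrix n n R) (W : Matrix m m R)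
    (A : Matrix n k R) (M : Matrix m n R) :
    (∀ V : Matrix m k R, weightedTraceForm D W M (V * Aᵀ) = 0) ↔ W * (M * D * A) = 0 := by
  have apply_eq (V : Matrix m k R) :
      weightedTraceForm D W M (V * Aᵀ) = trace (Vᵀ * (W * (M * D * A))) := calc
    weightedTraceForm D W M (V * Aᵀ) = trace ((M * D * A) * (Vᵀ * W)) := by
      simp only [weightedTraceForm_apply, transpose_mul, transpose_transpose, Matrix.mul_assoc]
    _ = trace (Vᵀ * (W * (M * D * A))) := by rw [trace_mul_comm, Matrix.mul_assoc]
  simp only [apply_eq, ext_iff_trace_mul_left, Matrix.mul_zero, trace_zero]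
  exact ⟨fun h U => by simpa only [transpose_transpose] using h Uᵀ, fun h V => h Vᵀ⟩

end WeightedTraceForm

theorem stmt_0_general {R m n k : Type*} [CommRing R] [Fintype m] [DecidableEq m] [Fintype n]
    [Fintype k] (h2 : IsLeftRegular (2 : R)) {D : Matrix n n R} (hD : D.IsSymm)
    {W : Matrix m m R} (hW : W.IsSymm) (hWu : IsUnit W) (A : Matrix n k R)
    (C X Z : Matrix m n R) :
    (∃ c : R, ∀ V : Matrix m k R,
      trace ((X - C - V * Aᵀ) * D * (X - C - V * Aᵀ)ᵀ * W) -
        trace ((Z - C - V * Aᵀ) * D * (Z - C - V * Aᵀ)ᵀ * W) = c) ↔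
      X * D * A = Z * D * A := by
  let _ := hWu.invertible
  simp only [← weightedTraceForm_apply]
  calc
    _ ↔ ∀ V : Matrix m k R, weightedTraceForm D W (X - C - (Z - C)) (V * Aᵀ) = 0 :=
      exists_forall_bilinForm_sub_self_sub_eq_iff (weightedTraceForm_isSymm hD hW) h2
        (mulRightLinearMap m R Aᵀ) (X - C) (Z - C)
    _ ↔ W * ((X - Z) * D * A) = 0 := by
      rw [sub_sub_sub_cancel_right, forall_weightedTraceForm_mul_transpose_eq_zero_iff]
    _ ↔ (X - Z) * D * A = 0 :=
      (mul_right_injective_of_invertible W).eq_iff' (Matrix.mul_zero W)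
    _ ↔ X * D * A = Z * D * A := by
      rw [Matrix.sub_mul, Matrix.sub_mul, sub_eq_zero]

theorem stmt_0 (n p d : ℕ) (hn : 0 < n) (hp : 0 < p) (hd : 0 < d)
    (Δ : Matrix (Fin p) (Fin p) ℝ) (hΔs : Δᵀ = Δ) (hΔ : IsUnit Δ.det)
    (S : Matrix (Fin n) (Fin n) ℝ) (hSs : Sᵀ = S) (hS : IsUnit S.det)
    (A : Matrix (Fin p) (Fin d) ℝ) (μ : Fin p → ℝ)
    (X Z : Matrix (Fin n) (Fin p) ℝ)
    (ℓ : Matrix (Fin n) (Fin p) ℝ → Matrix (Fin n) (Fin d) ℝ → ℝ)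
    (hℓ : ∀ M V, ℓ M V =
      Matrix.trace ((M - vecMulVec (fun _ => 1) μ - V * Aᵀ) * Δ⁻¹ *
        (M - vecMulVec (fun _ => 1) μ - V * Aᵀ)ᵀ * S⁻¹)) :
    (∃ c : ℝ, ∀ V : Matrix (Fin n) (Fin d) ℝ, ℓ X V - ℓ Z V = c) ↔
      X * Δ⁻¹ * A = Z * Δ⁻¹ * A := by
  simp only [hℓ]
  exact stmt_0_general (IsRegular.of_ne_zero two_ne_zero).left (IsSymm.inv hΔs) (IsSymm.inv hSs)
    (isUnit_nonsing_inv_iff.mpr ((isUnit_iff_isUnit_det S).mpr hS)) A _ X Z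
end

section
/- Let H be a symmetric invertible real n×n matrix with c := 1_nᵀ H⁻¹ 1_n ≠ 0, let X be a real n×p matrix, F a real n×r matrix, and C a real p×r matrix. Set μ̂ = (Xᵀ − C Fᵀ) H⁻¹ 1_n · c⁻¹ and H^c = I_n − c⁻¹ · 1_n 1_nᵀ H⁻¹. Then X − 1_n μ̂ᵀ − F Cᵀ = H^c X − H^c F Cᵀ = H^c (X − F Cᵀ). -/
open Matrix

section RankOneCorrection

variable {R n p r : Type*} [Fintype n]

theorem sub_vecMulVec_vecMul [DecidableEq n] [Ring R] (u w : n → R) (Y : Matrix n p R) :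
    Y - vecMulVec u (w ᵥ* Y) = (1 - vecMulVec u w) * Y := by
  rw [Matrix.sub_mul, Matrix.one_mul, vecMulVec_mul]

theorem transpose_mulVec_mulVec_of_isSymm [NonUnitalCommSemiring R] {W : Matrix n n R}
    (hW : W.IsSymm) (Y : Matrix n p R) (u : n → R) :
    Yᵀ *ᵥ (W *ᵥ u) = (u ᵥ* W) ᵥ* Y := by
  rw [mulVec_transpose, ← vecMul_transpose, hW.eq]

/-- `W`, `s`, `u`, `P` stand for `H⁻¹`, `c⁻¹`, `1_n`, `H^c`. The matrix `1 - P` is the rank-one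
`u (s uᵀ W)`, and by symmetry of `W` it maps the uncentered residual `X - F Cᵀ` to `u μᵀ`. -/
theorem stmt_8_general [DecidableEq n] [Fintype r] [CommRing R]
    {W : Matrix n n R} (hW : W.IsSymm) (s : R) (u : n → R)
    (X : Matrix n p R) (F : Matrix n r R) (C : Matrix p r R)
    {μ : p → R} (hμ : μ = s • ((Xᵀ - C * Fᵀ) *ᵥ (W *ᵥ u)))
    {P : Matrix n n R} (hP : P = 1 - s • (vecMulVec u u * W)) :
    X - vecMulVec u μ - F * Cᵀ = P * X - P * (F * Cᵀ) ∧
    P * X - P * (F * Cᵀ) = P * (X - F * Cᵀ) := by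
  have residual_transpose : Xᵀ - C * Fᵀ = (X - F * Cᵀ)ᵀ := by
    rw [transpose_sub, transpose_mul, transpose_transpose]
  have hμ_row : μ = (s • (u ᵥ* W)) ᵥ* (X - F * Cᵀ) := by
    rw [hμ, residual_transpose, transpose_mulVec_mulVec_of_isSymm hW, smul_vecMul]
  have hP_rankOne : P = 1 - vecMulVec u (s • (u ᵥ* W)) := by
    rw [hP, vecMulVec_mul, vecMulVec_smul]
  refine ⟨?_, (Matrix.mul_sub P X (F * Cᵀ)).symm⟩
  calc X - vecMulVec u μ - F * Cᵀ
      = (X - F * Cᵀ) - vecMulVec u ((s • (u ᵥ* W)) ᵥ* (X - F * Cᵀ)) := by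
        rw [hμ_row, sub_right_comm]
    _ = P * (X - F * Cᵀ) := by rw [sub_vecMulVec_vecMul, hP_rankOne]
    _ = P * X - P * (F * Cᵀ) := Matrix.mul_sub P X (F * Cᵀ)

end RankOneCorrection

theorem stmt_8 (n p r : ℕ)
    (H : Matrix (Fin n) (Fin n) ℝ) (hHs : Hᵀ = H) (hH : IsUnit H.det)
    (X : Matrix (Fin n) (Fin p) ℝ) (F : Matrix (Fin n) (Fin r) ℝ)
    (C : Matrix (Fin p) (Fin r) ℝ)
    (c : ℝ) (hc : c = (fun _ => (1 : ℝ)) ⬝ᵥ (H⁻¹ *ᵥ fun _ => (1 : ℝ))) (hc0 : c ≠ 0)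
    (μhat : Fin p → ℝ) (hμ : μhat = c⁻¹ • ((Xᵀ - C * Fᵀ) *ᵥ (H⁻¹ *ᵥ fun _ => (1 : ℝ))))
    (Hc : Matrix (Fin n) (Fin n) ℝ)
    (hHc : Hc = 1 - c⁻¹ • (vecMulVec (fun _ => 1) (fun _ => 1) * H⁻¹)) :
    X - vecMulVec (fun _ => 1) μhat - F * Cᵀ = Hc * X - Hc * (F * Cᵀ) ∧
    Hc * X - Hc * (F * Cᵀ) = Hc * (X - F * Cᵀ) :=
  stmt_8_general (IsSymm.inv hHs) c⁻¹ (fun _ => 1) X F C hμ hHc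
end

section
/- Let n, p be positive integers, let M be a real n×p matrix such that Σ := (1/n) Mᵀ M is positive definite. Then for every positive definite real p×p matrix Δ, −(n/2)·log(det Δ) − (1/2)·tr(M Δ⁻¹ Mᵀ) ≤ −(n/2)·log(det Σ) − (n·p)/2, with equality if and only if Δ = Σ. -/
open Matrix

/-!
The gap between the claimed maximum and the log-likelihood at `Δ` is `n / 2` times Stein's loss
`tr (S Δ⁻¹) - log det (S Δ⁻¹) - p`. This loss is unchanged when `S` and `Δ` undergo the same
congruence, so one may take `Δ = 1`, where it is the sum of `x - 1 - log x` over the eigenvalues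
`x` of `S`. Each term is nonnegative and vanishes only at `x = 1`.
-/

theorem log_eq_sub_one_iff {x : ℝ} (hx : 0 < x) : Real.log x = x - 1 ↔ x = 1 := by
  refine ⟨fun h => ?_, fun h => by simp [h]⟩
  by_contra hne
  exact (Real.log_lt_sub_one_of_pos hx hne).ne h

theorem trace_mul_mul_transpose_of_transpose_mul_self_eq_smul {ι κ R : Type*} [Fintype ι]
    [Fintype κ] [CommSemiring R] {M : Matrix κ ι R} {S : Matrix ι ι R} {c : R}
    (hM : Mᵀ * M = c • S) (A : Matrix ι ι R) :
    trace (M * A * Mᵀ) = c * trace (S * A) := by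
  rw [trace_mul_comm, ← Matrix.mul_assoc, hM, smul_mul, trace_smul, smul_eq_mul]

section RCLike

variable {ι 𝕜 : Type*} [Fintype ι] [DecidableEq ι] [RCLike 𝕜] {A : Matrix ι ι 𝕜}

theorem eq_one_of_eigenvalues_eq_one (hA : A.IsHermitian) (h : ∀ i, hA.eigenvalues i = 1) :
    A = 1 := by
  have diagonal_eq_one : diagonal (RCLike.ofReal ∘ hA.eigenvalues) = (1 : Matrix ι ι 𝕜) := by
    simp [Function.comp_def, h]
  rw [hA.spectral_theorem, diagonal_eq_one, map_one]

open scoped ComplexOrder MatrixOrder Matrix.Norms.L2Operator in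
theorem exists_isUnit_mul_mul_conjTranspose_eq_one (hA : A.PosDef) :
    ∃ B : Matrix ι ι 𝕜, IsUnit B ∧ B * A * Bᴴ = 1 := by
  obtain ⟨B, hB⟩ : ∃ B : Matrix ι ι 𝕜, A⁻¹ = Bᴴ * B :=
    CStarAlgebra.nonneg_iff_eq_star_mul_self.mp hA.inv.posSemidef.nonneg
  have left_inverse : Bᴴ * (B * A) = 1 := by
    rw [← Matrix.mul_assoc, ← hB, nonsing_inv_mul _ hA.det_pos.ne'.isUnit]
  exact ⟨B, (isUnit_conjTranspose B).mp (.of_mul_eq_one _ left_inverse),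
    mul_eq_one_comm.mp left_inverse⟩

end RCLike

/-- Stein's loss (the log-determinant divergence) of the covariance matrix `S` relative to `Δ`;
it is twice the Kullback–Leibler divergence of the centred Gaussian with covariance `S` from the
one with covariance `Δ`. It has this meaning for positive definite arguments; otherwise `Δ⁻¹` and
`Real.log` may take junk values. -/
noncomputable def steinLoss {ι : Type*} [Fintype ι] [DecidableEq ι] (S Δ : Matrix ι ι ℝ) : ℝ :=
  trace (S * Δ⁻¹) - Real.log (S * Δ⁻¹).det - Fintype.card ι

section SteinLoss

variable {ι : Type*} [Fintype ι] [DecidableEq ι] {S Δ B C : Matrix ι ι ℝ}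

theorem steinLoss_mul_mul (hB : IsUnit B) (hC : IsUnit C) :
    steinLoss (B * S * C) (B * Δ * C) = steinLoss S Δ := by
  have similar : B * S * C * (B * Δ * C)⁻¹ = B * (S * Δ⁻¹) * B⁻¹ := by
    have hC' : C * C⁻¹ = 1 := mul_nonsing_inv _ ((isUnit_iff_isUnit_det C).mp hC)
    calc B * S * C * (B * Δ * C)⁻¹ = B * S * (C * C⁻¹) * Δ⁻¹ * B⁻¹ := by
          simp only [Matrix.mul_inv_rev, Matrix.mul_assoc]
      _ = B * (S * Δ⁻¹) * B⁻¹ := by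
          simp only [hC', Matrix.mul_one, Matrix.mul_assoc]
  rw [steinLoss, similar, trace_conj hB, det_conj hB, steinLoss]

theorem steinLoss_one_right_eq_sum (hS : S.PosDef) :
    steinLoss S 1 = ∑ i, (hS.1.eigenvalues i - 1 - Real.log (hS.1.eigenvalues i)) := by
  have log_det : Real.log S.det = ∑ i, Real.log (hS.1.eigenvalues i) := by
    rw [hS.1.det_eq_prod_eigenvalues]
    exact Real.log_prod fun i _ => (hS.eigenvalues_pos i).ne'
  have trace_eq : S.trace = ∑ i, hS.1.eigenvalues i := hS.1.trace_eq_sum_eigenvalues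
  simp only [steinLoss, inv_one, Matrix.mul_one, log_det, trace_eq, Finset.sum_sub_distrib,
    Finset.sum_const, Finset.card_univ, nsmul_one]
  ring

theorem steinLoss_one_right_nonneg (hS : S.PosDef) : 0 ≤ steinLoss S 1 := by
  rw [steinLoss_one_right_eq_sum hS]
  exact Finset.sum_nonneg fun i _ =>
    sub_nonneg.mpr (Real.log_le_sub_one_of_pos (hS.eigenvalues_pos i))

theorem eq_one_of_steinLoss_one_right_eq_zero (hS : S.PosDef) (h : steinLoss S 1 = 0) :
    S = 1 := by
  rw [steinLoss_one_right_eq_sum hS, Finset.sum_eq_zero_iff_of_nonneg fun i _ =>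
    sub_nonneg.mpr (Real.log_le_sub_one_of_pos (hS.eigenvalues_pos i))] at h
  have log_eigenvalues (i : ι) : Real.log (hS.1.eigenvalues i) = hS.1.eigenvalues i - 1 :=
    (sub_eq_zero.mp (h i (Finset.mem_univ i))).symm
  exact eq_one_of_eigenvalues_eq_one hS.1 fun i =>
    (log_eq_sub_one_iff (hS.eigenvalues_pos i)).mp (log_eigenvalues i)

theorem steinLoss_self (hS : IsUnit S) : steinLoss S S = 0 := by
  simp [steinLoss, mul_nonsing_inv _ ((isUnit_iff_isUnit_det S).mp hS)]

theorem steinLoss_nonneg (hS : S.PosDef) (hΔ : Δ.PosDef) : 0 ≤ steinLoss S Δ := by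
  obtain ⟨B, hB, hBΔ⟩ := exists_isUnit_mul_mul_conjTranspose_eq_one hΔ
  rw [← steinLoss_mul_mul hB ((isUnit_conjTranspose B).mpr hB), hBΔ]
  exact steinLoss_one_right_nonneg ((IsUnit.posDef_star_right_conjugate_iff hB).mpr hS)

theorem steinLoss_eq_zero_iff (hS : S.PosDef) (hΔ : Δ.PosDef) : steinLoss S Δ = 0 ↔ Δ = S := by
  refine ⟨fun h => ?_, fun h => h ▸ steinLoss_self hΔ.isUnit⟩
  obtain ⟨B, hB, hBΔ⟩ := exists_isUnit_mul_mul_conjTranspose_eq_one hΔ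
  have hB' : IsUnit Bᴴ := (isUnit_conjTranspose B).mpr hB
  rw [← steinLoss_mul_mul hB hB', hBΔ] at h
  have hBS : B * S * Bᴴ = 1 := eq_one_of_steinLoss_one_right_eq_zero
    ((IsUnit.posDef_star_right_conjugate_iff hB).mpr hS) h
  exact hB.mul_left_cancel (hB'.mul_right_cancel (hBΔ.trans hBS.symm))

theorem log_det_mul_inv (hS : S.det ≠ 0) (hΔ : Δ.det ≠ 0) :
    Real.log (S * Δ⁻¹).det = Real.log S.det - Real.log Δ.det := by
  rw [det_mul, det_nonsing_inv, Ring.inverse_eq_inv', Real.log_mul hS (inv_ne_zero hΔ),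
    Real.log_inv, sub_eq_add_neg]

theorem gaussian_logLikelihood_eq_sub_steinLoss {κ : Type*} [Fintype κ] {M : Matrix κ ι ℝ} {c : ℝ}
    (hM : Mᵀ * M = c • S) (hS : S.det ≠ 0) (hΔ : Δ.det ≠ 0) :
    -(c / 2) * Real.log Δ.det - 1 / 2 * trace (M * Δ⁻¹ * Mᵀ)
      = -(c / 2) * Real.log S.det - c * Fintype.card ι / 2 - c / 2 * steinLoss S Δ := by
  rw [trace_mul_mul_transpose_of_transpose_mul_self_eq_smul hM, steinLoss,
    log_det_mul_inv hS hΔ]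
  ring

end SteinLoss

theorem stmt_11 (n p : ℕ) (hn : 0 < n) (hp : 0 < p)
    (M : Matrix (Fin n) (Fin p) ℝ)
    (S : Matrix (Fin p) (Fin p) ℝ) (hSdef : S = (1 / (n : ℝ)) • (Mᵀ * M))
    (hS : S.PosDef) :
    ∀ Δ : Matrix (Fin p) (Fin p) ℝ, Δ.PosDef →
      (-((n : ℝ) / 2) * Real.log Δ.det - (1 / 2) * trace (M * Δ⁻¹ * Mᵀ)
          ≤ -((n : ℝ) / 2) * Real.log S.det - ((n : ℝ) * p) / 2) ∧
      ((-((n : ℝ) / 2) * Real.log Δ.det - (1 / 2) * trace (M * Δ⁻¹ * Mᵀ)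
          = -((n : ℝ) / 2) * Real.log S.det - ((n : ℝ) * p) / 2) ↔ Δ = S) := by
  intro Δ hΔ
  have hn_pos : (0 : ℝ) < n / 2 := by positivity
  have hM : Mᵀ * M = (n : ℝ) • S := by
    rw [hSdef, smul_smul, mul_one_div_cancel (by positivity), one_smul]
  rw [gaussian_logLikelihood_eq_sub_steinLoss hM hS.det_pos.ne' hΔ.det_pos.ne', Fintype.card_fin]
  constructor
  · exact sub_le_self _ (mul_nonneg hn_pos.le (steinLoss_nonneg hS hΔ))
  · rw [sub_eq_self, mul_eq_zero_iff_left hn_pos.ne', steinLoss_eq_zero_iff hS hΔ]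
end

section
/- Let W_θ be a symmetric invertible real n×n matrix with c := 1_nᵀ W_θ² 1_n ≠ 0, let X be a real n×p matrix, F a real n×r matrix, and C a real p×r matrix. Set μ̃ = (Xᵀ − C Fᵀ) W_θ² 1_n · c⁻¹ and W^c_θ = I_n − c⁻¹ · 1_n 1_nᵀ W_θ². Then X − 1_n μ̃ᵀ − F Cᵀ = W^c_θ X − W^c_θ F Cᵀ = W^c_θ (X − F Cᵀ). -/
open Matrix

section Centering

variable {R m k r : Type*} [Fintype m] [DecidableEq m]

theorem one_sub_vecMulVec_mul [Ring R] (u v : m → R) (Y : Matrix m k R) :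
    (1 - vecMulVec u v) * Y = Y - vecMulVec u (v ᵥ* Y) := by
  rw [Matrix.sub_mul, Matrix.one_mul, vecMulVec_mul]

variable [CommRing R]

theorem one_sub_smul_vecMulVec_mul_mul {S : Matrix m m R} (hS : S.IsSymm) (a : R) (u v : m → R)
    (Y : Matrix m k R) :
    (1 - a • (vecMulVec u v * S)) * Y = Y - vecMulVec u (a • (Yᵀ *ᵥ (S *ᵥ v))) := by
  have weight_eq : v ᵥ* S = S *ᵥ v := by rw [← mulVec_transpose, hS.eq]
  rw [vecMulVec_mul, weight_eq, ← vecMulVec_smul, one_sub_vecMulVec_mul, smul_vecMul,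
    mulVec_transpose]

theorem stmt_16_general [Fintype r] {S : Matrix m m R} (hS : S.IsSymm) (a : R) (u v : m → R)
    (X : Matrix m k R) (F : Matrix m r R) (C : Matrix k r R) :
    X - vecMulVec u (a • ((Xᵀ - C * Fᵀ) *ᵥ (S *ᵥ v))) - F * Cᵀ =
      (1 - a • (vecMulVec u v * S)) * X - (1 - a • (vecMulVec u v * S)) * (F * Cᵀ) ∧
    (1 - a • (vecMulVec u v * S)) * X - (1 - a • (vecMulVec u v * S)) * (F * Cᵀ) =
      (1 - a • (vecMulVec u v * S)) * (X - F * Cᵀ) := by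
  have transpose_residual : (X - F * Cᵀ)ᵀ = Xᵀ - C * Fᵀ := by
    rw [transpose_sub, transpose_mul, transpose_transpose]
  refine ⟨?_, (Matrix.mul_sub _ _ _).symm⟩
  rw [← Matrix.mul_sub, one_sub_smul_vecMulVec_mul_mul hS, transpose_residual, sub_right_comm]

end Centering

theorem stmt_16 (n p r : ℕ)
    (W : Matrix (Fin n) (Fin n) ℝ) (hWs : Wᵀ = W) (hW : IsUnit W.det)
    (c : ℝ) (hc : c = (fun _ => (1 : ℝ)) ⬝ᵥ ((W * W) *ᵥ fun _ => (1 : ℝ))) (hc0 : c ≠ 0)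
    (X : Matrix (Fin n) (Fin p) ℝ) (F : Matrix (Fin n) (Fin r) ℝ)
    (C : Matrix (Fin p) (Fin r) ℝ)
    (μtilde : Fin p → ℝ)
    (hμ : μtilde = c⁻¹ • ((Xᵀ - C * Fᵀ) *ᵥ ((W * W) *ᵥ fun _ => (1 : ℝ))))
    (Wc : Matrix (Fin n) (Fin n) ℝ)
    (hWc : Wc = 1 - c⁻¹ • (vecMulVec (fun _ => 1) (fun _ => 1) * (W * W))) :
    X - vecMulVec (fun _ => 1) μtilde - F * Cᵀ = Wc * X - Wc * (F * Cᵀ) ∧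
    Wc * X - Wc * (F * Cᵀ) = Wc * (X - F * Cᵀ) := by
  have hS : (W * W).IsSymm := by rw [IsSymm, transpose_mul, hWs]
  simpa only [hμ, hWc] using stmt_16_general hS c⁻¹ (fun _ => 1) (fun _ => 1) X F C
end
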